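/- Let α : (0,1) → ℝ be locally integrable with ∫_0^1 r |α(r)|² dr < ∞, and suppose that for every smooth compactly supported χ̃ ∈ C_c^∞(0,1) one has ∫_0^1 (1/r)(r² χ̃''(r) + r χ̃'(r) - κ² χ̃(r)) α(r) dr = 0 for a fixed κ ≥ 1. Then α(r) = a r^κ for some constant a, i.e. the solution branch r^{-κ} is excluded. -/

import Mathlib

open MeasureTheory

/-- Test functions on `(0,1)`. -/
def Tst (w : ℝ → ℝ) : Prop :=
  ContDiff ℝ (⊤ : ℕ∞) w ∧ ∃ a b : ℝ, 0 < a ∧ a < b ∧ b < 1 ∧ ∀ x, x ∉ Set.Icc a b → w x = 0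

lemma Tst.diff {w : ℝ → ℝ} (h : Tst w) : Differentiable ℝ w :=
  h.1.differentiable (by simp)

lemma Tst.compact {w : ℝ → ℝ} (h : Tst w) :
    HasCompactSupport w ∧ tsupport w ⊆ Set.Ioo 0 1 := by
  obtain ⟨hc, a, b, ha, hab, hb, h0⟩ := h
  refine ⟨HasCompactSupport.intro isCompact_Icc h0, ?_⟩
  have : tsupport w ⊆ Set.Icc a b := by
    apply closure_minimal _ isClosed_Icc
    intro x hx
    by_contra hh
    exact hx (h0 x hh)
  exact this.trans (fun x hx => ⟨by linarith [hx.1], by linarith [hx.2]⟩)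

lemma Tst.of_compact {w : ℝ → ℝ} (hc : ContDiff ℝ (⊤ : ℕ∞) w) (h1 : HasCompactSupport w)
    (h2 : tsupport w ⊆ Set.Ioo 0 1) : Tst w := by
  refine ⟨hc, ?_⟩
  by_cases he : (tsupport w).Nonempty
  · obtain ⟨m, hm, hm'⟩ := h1.isCompact.exists_isLeast he
    obtain ⟨M, hM, hM'⟩ := h1.isCompact.exists_isGreatest he
    have := h2 hm
    have h3 := h2 hM
    refine ⟨m/2, (M+1)/2, by linarith [this.1], ?_, by linarith [h3.2], ?_⟩
    · linarith [hm' hM, this.1, this.2]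
    · intro x hx
      by_contra hh
      have hx' : x ∈ tsupport w := subset_tsupport _ hh
      exact hx ⟨by linarith [hm' hx', this.1], by linarith [hM' hx', h3.2]⟩
  · refine ⟨1/3, 1/2, by norm_num, by norm_num, by norm_num, fun x _ => ?_⟩
    by_contra hh
    exact he ⟨x, subset_tsupport _ hh⟩

lemma Tst.deriv {w : ℝ → ℝ} (h : Tst w) : Tst (deriv w) := by
  obtain ⟨hc, a, b, ha, hab, hb, h0⟩ := h
  refine ⟨(contDiff_infty_iff_deriv.1 hc).2, a, b, ha, hab, hb, fun x hx => ?_⟩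
  have : w =ᶠ[nhds x] fun _ => 0 := by
    filter_upwards [isClosed_Icc.isOpen_compl.mem_nhds hx] with y hy using h0 y hy
  rw [this.deriv_eq]; simp

lemma Tst.sub_smul {w v : ℝ → ℝ} (h : Tst w) (hv : Tst v) (c : ℝ) :
    Tst (fun x => w x - c * v x) := by
  obtain ⟨hc, a, b, ha, hab, hb, h0⟩ := h
  obtain ⟨hc', a', b', ha', hab', hb', h0'⟩ := hv
  refine ⟨hc.sub (contDiff_const.mul hc'), min a a', max b b', lt_min ha ha',
    (min_le_left _ _).trans_lt (hab.trans_le (le_max_left _ _)), max_lt hb hb', fun x hx => ?_⟩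
  beta_reduce
  rw [h0 x, h0' x]
  · simp
  · exact fun hh => hx ⟨(min_le_right _ _).trans hh.1, hh.2.trans (le_max_right _ _)⟩
  · exact fun hh => hx ⟨(min_le_left _ _).trans hh.1, hh.2.trans (le_max_left _ _)⟩

lemma Tst.rpow_mul {w : ℝ → ℝ} (h : Tst w) (s : ℝ) : Tst (fun x => x ^ s * w x) := by
  obtain ⟨hc, a, b, ha, hab, hb, h0⟩ := h
  refine ⟨?_, a, b, ha, hab, hb, fun x hx => by beta_reduce; rw [h0 x hx, mul_zero]⟩
  rw [contDiff_iff_contDiffAt]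
  intro x
  rcases lt_or_ge 0 x with hx | hx
  · exact (Real.contDiffAt_rpow_const_of_ne hx.ne').mul hc.contDiffAt
  · have : (fun x => x ^ s * w x) =ᶠ[nhds x] fun _ => 0 := by
      filter_upwards [gt_mem_nhds (hx.trans_lt ha)] with y hy
      rw [h0 y (fun hh => by linarith [hh.1]), mul_zero]
    exact contDiffAt_const.congr_of_eventuallyEq this

lemma Tst.integrable {w f : ℝ → ℝ} (h : Tst w) (hf : LocallyIntegrableOn f (Set.Ioo 0 1)) :
    IntegrableOn (fun x => w x * f x) (Set.Ioo 0 1) := by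
  obtain ⟨hc, a, b, ha, hab, hb, h0⟩ := h
  have hs : Set.Icc a b ⊆ Set.Ioo 0 1 := fun x hx => ⟨by linarith [hx.1], by linarith [hx.2]⟩
  have h1 : IntegrableOn f (Set.Icc a b) := hf.integrableOn_compact_subset hs isCompact_Icc
  have h2 := h1.continuousOn_mul hc.continuous.continuousOn isCompact_Icc
  exact IntegrableOn.of_forall_sdiff_eq_zero h2 measurableSet_Ioo
    (fun x hx => by rw [h0 x hx.2, zero_mul])

lemma Tst.integral_deriv {w : ℝ → ℝ} (h : Tst w) : ∫ x in Set.Ioo (0:ℝ) 1, _root_.deriv w x = 0 := by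
  rw [← integral_Ioc_eq_integral_Ioo, ← intervalIntegral.integral_of_le zero_le_one,
    intervalIntegral.integral_deriv_eq_sub (fun x _ => h.diff x)
      (h.deriv.1.continuous.intervalIntegrable _ _)]
  obtain ⟨hc, a, b, ha, hab, hb, h0⟩ := h
  rw [h0 0 (fun hh => by linarith [hh.1]), h0 1 (fun hh => by linarith [hh.2]), sub_zero]

lemma Tst.exists_prim {w : ℝ → ℝ} (h : Tst w) (hi : ∫ x in Set.Ioo (0:ℝ) 1, w x = 0) :
    ∃ H, Tst H ∧ _root_.deriv H = w := by
  rw [← integral_Ioc_eq_integral_Ioo, ← intervalIntegral.integral_of_le zero_le_one] at hi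
  obtain ⟨hc, a, b, ha, hab, hb, h0⟩ := h
  have hd : ∀ x, HasDerivAt (fun x => ∫ t in (0:ℝ)..x, w t) (w x) x := fun x =>
    intervalIntegral.integral_hasDerivAt_right (hc.continuous.intervalIntegrable _ _)
      (hc.continuous.stronglyMeasurableAtFilter _ _) hc.continuous.continuousAt
  have hd' : _root_.deriv (fun x => ∫ t in (0:ℝ)..x, w t) = w := funext fun x => (hd x).deriv
  refine ⟨_, ⟨?_, a, b, ha, hab, hb, ?_⟩, hd'⟩
  · rw [contDiff_infty_iff_deriv, hd']
    exact ⟨fun x => (hd x).differentiableAt, hc⟩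
  · intro x hx
    have key : ∀ y z : ℝ, (∀ t ∈ Set.uIcc y z, w t = 0) → ∫ t in y..z, w t = 0 := by
      intro y z hh
      rw [intervalIntegral.integral_congr (g := fun _ => 0) hh]; simp
    rcases lt_or_ge x a with hxa | hxa
    · apply key
      intro t ht
      apply h0
      intro hh
      have := ht.2
      have h2 : max 0 x < a := max_lt ha hxa
      exact absurd (hh.1.trans this) (not_le.2 h2)
    · have hxb : b < x := by
        by_contra hh
        exact hx ⟨hxa, not_lt.1 hh⟩
      show ∫ t in (0:ℝ)..x, w t = 0
      rw [← intervalIntegral.integral_add_adjacent_intervals (b := 1)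
        (hc.continuous.intervalIntegrable _ _) (hc.continuous.intervalIntegrable _ _), hi, zero_add]
      apply key
      intro t ht
      apply h0
      intro hh
      have h2 : b < min 1 x := lt_min hb hxb
      exact absurd (ht.1.trans hh.2) (not_le.2 h2)

lemma exists_tst : ∃ φ, Tst φ ∧ ∫ x in Set.Ioo (0:ℝ) 1, φ x = 1 := by
  let f : ContDiffBump (1/2 : ℝ) := ⟨1/8, 1/4, by norm_num, by norm_num⟩
  have hsup : ∀ x, x ∉ Set.Icc (1/4:ℝ) (3/4) → f.normed volume x = 0 := by
    intro x hx
    by_contra hh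
    have h1 : x ∈ Function.support (f.normed volume) := hh
    rw [f.support_normed_eq, Real.ball_eq_Ioo] at h1
    have h3 := h1.1
    have h4 := h1.2
    have : f.rOut = 1/4 := rfl
    rw [this] at h3 h4
    exact hx ⟨by linarith, by linarith⟩
  refine ⟨f.normed volume, ⟨f.contDiff_normed, 1/4, 3/4, by norm_num, by norm_num, by norm_num,
    hsup⟩, ?_⟩
  rw [setIntegral_eq_integral_of_forall_compl_eq_zero, f.integral_normed]
  intro x hx
  apply hsup
  exact fun hh => hx ⟨by linarith [hh.1], by linarith [hh.2]⟩

lemma dbr {f : ℝ → ℝ} (hf : LocallyIntegrableOn f (Set.Ioo 0 1))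
    (h : ∀ w, Tst w → ∫ x in Set.Ioo (0:ℝ) 1, deriv w x * f x = 0) :
    ∃ c, ∀ᵐ x ∂(volume.restrict (Set.Ioo (0:ℝ) 1)), f x = c := by
  obtain ⟨φ, hφ, hφ1⟩ := exists_tst
  have h1 : LocallyIntegrableOn (fun _ : ℝ => (1:ℝ)) (Set.Ioo (0:ℝ) 1) :=
    (locallyIntegrable_const _).locallyIntegrableOn _
  set c := ∫ x in Set.Ioo (0:ℝ) 1, φ x * f x with hcdef
  refine ⟨c, ?_⟩
  have hcl : LocallyIntegrableOn (fun _ : ℝ => c) (Set.Ioo (0:ℝ) 1) :=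
    (locallyIntegrable_const _).locallyIntegrableOn _
  have hmain := isOpen_Ioo.ae_eq_zero_of_integral_contDiff_smul_eq_zero (μ := volume)
    (U := Set.Ioo (0:ℝ) 1) (f := fun x => f x - c) (hf.sub hcl) ?_
  · rw [ae_restrict_iff' measurableSet_Ioo]
    filter_upwards [hmain] with x hx hx'
    linarith [hx hx']
  · intro g hg hgc hgs
    have hT : Tst g := Tst.of_compact hg hgc hgs
    have hgi : IntegrableOn g (Set.Ioo 0 1) := by simpa using hT.integrable h1
    have hφi : IntegrableOn φ (Set.Ioo 0 1) := by simpa using hφ.integrable h1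
    rw [← setIntegral_eq_integral_of_forall_compl_eq_zero (s := Set.Ioo (0:ℝ) 1)]
    · obtain ⟨H, hH, hH'⟩ := (hT.sub_smul hφ (∫ x in Set.Ioo (0:ℝ) 1, g x)).exists_prim (by
        rw [integral_sub hgi (hφi.const_mul _), integral_const_mul, hφ1]; ring)
      have h2 := h H hH
      rw [hH'] at h2
      simp only [sub_mul, mul_assoc] at h2
      rw [integral_sub (hT.integrable hf) ((hφ.integrable hf).const_mul _), integral_const_mul] at h2
      simp only [smul_eq_mul, mul_sub]
      rw [integral_sub (hT.integrable hf) (hgi.mul_const _), integral_mul_const]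
      linarith
    · intro x hx
      have : g x = 0 := by
        by_contra hh
        exact hx (hgs (subset_tsupport _ hh))
      simp [this]

lemma locInt_rpow (s : ℝ) : LocallyIntegrableOn (fun x : ℝ => x ^ s) (Set.Ioo 0 1) := by
  apply ContinuousOn.locallyIntegrableOn _ measurableSet_Ioo
  exact fun x hx => (Real.continuousAt_rpow_const x s (Or.inl hx.1.ne')).continuousWithinAt

lemma locInt_rpow_mul {α : ℝ → ℝ} (hloc : LocallyIntegrableOn α (Set.Ioo 0 1)) (s : ℝ) :
    LocallyIntegrableOn (fun x : ℝ => x ^ s * α x) (Set.Ioo 0 1) := by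
  refine hloc.continuousOn_mul (f := α) (g := fun x : ℝ => x ^ s) ?_ isOpen_Ioo.isLocallyClosed
  exact fun x hx => (Real.continuousAt_rpow_const x s (Or.inl hx.1.ne')).continuousWithinAt

lemma exists_tst_rpow (s : ℝ) : ∃ φ, Tst φ ∧ ∫ x in Set.Ioo (0:ℝ) 1, φ x * x ^ s = 1 := by
  obtain ⟨φ, hφ, hφ1⟩ := exists_tst
  refine ⟨_, hφ.rpow_mul (-s), ?_⟩
  refine Eq.trans ?_ hφ1
  apply setIntegral_congr_fun measurableSet_Ioo
  intro x hx
  have := Real.rpow_pos_of_pos hx.1 s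
  simp only [Real.rpow_neg hx.1.le]
  field_simp

lemma step1 (κ : ℝ) (α : ℝ → ℝ)
    (hweak : ∀ χ : ℝ → ℝ, ContDiff ℝ (⊤ : ℕ∞) χ → HasCompactSupport χ →
      tsupport χ ⊆ Set.Ioo 0 1 →
      ∫ r in Set.Ioo (0 : ℝ) 1,
        (1/r) * (r ^ 2 * deriv (deriv χ) r + r * deriv χ r - κ ^ 2 * χ r) * α r = 0)
    (w : ℝ → ℝ) (hw : Tst w) (hi : ∫ x in Set.Ioo (0:ℝ) 1, w x * x ^ (-2*κ-1) = 0) :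
    ∫ x in Set.Ioo (0:ℝ) 1, deriv w x * (x ^ (-κ) * α x) = 0 := by
  obtain ⟨u, hu, hu'⟩ := (hw.rpow_mul (-2*κ-1)).exists_prim (by simpa only [mul_comm] using hi)
  have hχ := hu.rpow_mul κ
  refine Eq.trans ?_ (hweak _ hχ.1 hχ.compact.1 hχ.compact.2)
  apply setIntegral_congr_fun measurableSet_Ioo
  intro r hr
  have hud : ∀ x, HasDerivAt u (x ^ (-2*κ-1) * w x) x := fun x => by
    have := (hu.diff x).hasDerivAt
    rwa [hu'] at this
  have hwd : ∀ x, HasDerivAt w (deriv w x) x := fun x => (hw.diff x).hasDerivAt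
  have hpd : ∀ s x : ℝ, 0 < x → HasDerivAt (fun x : ℝ => x ^ s) (s * x ^ (s-1)) x :=
    fun s x hx => Real.hasDerivAt_rpow_const (Or.inl hx.ne')
  have d1 : ∀ x, 0 < x → deriv (fun x => x ^ κ * u x) x
      = κ * x ^ (κ-1) * u x + x ^ κ * (x ^ (-2*κ-1) * w x) := fun x hx =>
    ((hpd κ x hx).mul (hud x)).deriv
  have d2 : deriv (deriv (fun x => x ^ κ * u x)) r
      = (κ * ((κ-1) * r ^ (κ-1-1))) * u r + (κ * r ^ (κ-1)) * (r ^ (-2*κ-1) * w r)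
        + (κ * r ^ (κ-1) * (r ^ (-2*κ-1) * w r)
          + r ^ κ * ((-2*κ-1) * r ^ (-2*κ-1-1) * w r + r ^ (-2*κ-1) * deriv w r)) := by
    have e : deriv (fun x => x ^ κ * u x) =ᶠ[nhds r]
        fun x => κ * x ^ (κ-1) * u x + x ^ κ * (x ^ (-2*κ-1) * w x) := by
      filter_upwards [lt_mem_nhds hr.1] with x hx using d1 x hx
    rw [e.deriv_eq]
    exact ((((hpd (κ-1) r hr.1).const_mul κ).mul (hud r)).add
      ((hpd κ r hr.1).mul ((hpd (-2*κ-1) r hr.1).mul (hwd r)))).deriv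
  have hr0 := hr.1.ne'
  have p1 : r ^ (-κ) = (r ^ κ)⁻¹ := Real.rpow_neg hr.1.le _
  have p2 : r ^ (-2*κ-1) = (r ^ κ)⁻¹ * (r ^ κ)⁻¹ / r := by
    rw [Real.rpow_sub_one hr0, ← p1, ← Real.rpow_add hr.1]; ring_nf
  have hP := (Real.rpow_pos_of_pos hr.1 κ).ne'
  beta_reduce
  rw [d2, d1 r hr.1]
  rw [Real.rpow_sub_one hr0 (-2*κ-1), Real.rpow_sub_one hr0 (κ-1), Real.rpow_sub_one hr0 κ, p1, p2]
  generalize r ^ κ = P at *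
  field_simp
  ring

lemma byparts (s : ℝ) (w : ℝ → ℝ) (hw : Tst w) :
    ∫ x in Set.Ioo (0:ℝ) 1, deriv w x * x ^ s = - s * ∫ x in Set.Ioo (0:ℝ) 1, w x * x ^ (s-1) := by
  have h := (hw.rpow_mul s).integral_deriv
  have e : ∫ x in Set.Ioo (0:ℝ) 1, deriv (fun x => x ^ s * w x) x
      = ∫ x in Set.Ioo (0:ℝ) 1, (s * (w x * x ^ (s-1)) + deriv w x * x ^ s) := by
    apply setIntegral_congr_fun measurableSet_Ioo
    intro x hx
    beta_reduce
    have := ((Real.hasDerivAt_rpow_const (p := s) (Or.inl hx.1.ne')).mul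
      (hw.diff x).hasDerivAt).deriv
    refine Eq.trans this ?_
    ring
  rw [e, integral_add ((hw.integrable (locInt_rpow _)).const_mul _)
    (hw.deriv.integrable (locInt_rpow _)), integral_const_mul] at h
  linarith

/-- If `α` is locally integrable on `(0,1)` with `∫_0^1 r α(r)² dr < ∞`,
solves the Euler equation `r(rα')' = κ²α` weakly against all test functions supported in
`(0,1)`, and `κ ≥ 1`, then `α(r) = a r^κ` (a.e.); the branch `r^{-κ}` is excluded. -/
theorem stmt_9 (κ : ℝ) (hκ : 1 ≤ κ) (α : ℝ → ℝ)
    (hloc : LocallyIntegrableOn α (Set.Ioo 0 1))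
    (hint : IntegrableOn (fun r => r * (α r) ^ 2) (Set.Ioo 0 1))
    (hweak : ∀ χ : ℝ → ℝ, ContDiff ℝ (⊤ : ℕ∞) χ → HasCompactSupport χ →
      tsupport χ ⊆ Set.Ioo 0 1 →
      ∫ r in Set.Ioo (0 : ℝ) 1,
        (1/r) * (r ^ 2 * deriv (deriv χ) r + r * deriv χ r - κ ^ 2 * χ r) * α r = 0) :
    ∃ a : ℝ, ∀ᵐ r ∂(volume.restrict (Set.Ioo (0 : ℝ) 1)), α r = a * r ^ κ := by
  obtain ⟨φ, hφ, hφ1⟩ := exists_tst_rpow (-2*κ-1)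
  have hl := locInt_rpow_mul hloc (-κ)
  set c := ∫ x in Set.Ioo (0:ℝ) 1, deriv φ x * (x ^ (-κ) * α x) with hc
  have hl2 : LocallyIntegrableOn (fun x : ℝ => c / (2*κ) * x ^ (-2*κ)) (Set.Ioo 0 1) :=
    (locInt_rpow (-2*κ)).smul (c / (2*κ))
  have hκ0 : κ ≠ 0 := by linarith
  obtain ⟨a, ha⟩ := dbr (hl.sub hl2) (by
    intro w hw
    set m := ∫ x in Set.Ioo (0:ℝ) 1, w x * x ^ (-2*κ-1) with hm
    have h1 := step1 κ α hweak _ (hw.sub_smul hφ m) (by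
      simp only [sub_mul, mul_assoc]
      rw [integral_sub (hw.integrable (locInt_rpow _))
        ((hφ.integrable (locInt_rpow _)).const_mul _), integral_const_mul, hφ1]
      simp [m])
    have hd : ∀ x, deriv (fun x => w x - m * φ x) x = deriv w x - m * deriv φ x := fun x =>
      ((hw.diff x).hasDerivAt.sub ((hφ.diff x).hasDerivAt.const_mul m)).deriv
    simp only [hd, sub_mul, mul_assoc m] at h1
    rw [integral_sub (hw.deriv.integrable hl) ((hφ.deriv.integrable hl).const_mul _),
      integral_const_mul, ← hc] at h1
    have h2 := byparts (-2*κ) w hw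
    simp only [Pi.sub_apply, mul_sub]
    rw [integral_sub (hw.deriv.integrable hl) (hw.deriv.integrable hl2)]
    simp only [mul_left_comm _ (c / (2*κ))]
    rw [integral_const_mul, h2, ← hm]
    have h3 : c / (2*κ) * (-(-2*κ) * m) = m * c := by field_simp
    rw [h3]
    exact h1)
  set b := c / (2*κ) with hb
  have hα : ∀ᵐ r ∂(volume.restrict (Set.Ioo (0 : ℝ) 1)), α r = a * r ^ κ + b * r ^ (-κ) := by
    filter_upwards [ha, ae_restrict_mem measurableSet_Ioo] with r h hr
    have hP := (Real.rpow_pos_of_pos hr.1 κ).ne'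
    have p1 : r ^ (-κ) = (r ^ κ)⁻¹ := Real.rpow_neg hr.1.le _
    have p2 : r ^ (-2*κ) = (r ^ κ)⁻¹ * (r ^ κ)⁻¹ := by
      rw [← p1, ← Real.rpow_add hr.1]; ring_nf
    simp only [Pi.sub_apply] at h
    rw [p2, p1] at h
    rw [p1]
    field_simp at h ⊢
    linarith
  have hb0 : b = 0 := by
    by_contra hbne
    have hc1 : IntegrableOn (fun r : ℝ => a ^ 2 * r ^ (2*κ+1) + 2*a*b * r) (Set.Ioo 0 1) := by
      apply IntegrableOn.mono_set _ Set.Ioo_subset_Icc_self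
      apply ContinuousOn.integrableOn_Icc
      apply Continuous.continuousOn
      exact (continuous_const.mul (Real.continuous_rpow_const (by linarith))).add
        (continuous_const.mul continuous_id)
    have h3 : IntegrableOn (fun r : ℝ => r ^ (1-2*κ)) (Set.Ioo 0 1) := by
      refine ((hint.sub hc1).const_mul (b^2)⁻¹).congr ?_
      filter_upwards [hα, ae_restrict_mem measurableSet_Ioo] with r h hr
      have hP := (Real.rpow_pos_of_pos hr.1 κ).ne'
      have p1 : r ^ (-κ) = (r ^ κ)⁻¹ := Real.rpow_neg hr.1.le _
      have p2 : r ^ (1-2*κ) = r * ((r ^ κ)⁻¹ * (r ^ κ)⁻¹) := by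
        rw [← p1, ← Real.rpow_add hr.1, ← Real.rpow_one_add' hr.1.le (by linarith)]; ring_nf
      have p3 : r ^ (2*κ+1) = r * (r ^ κ * r ^ κ) := by
        rw [← Real.rpow_add hr.1, ← Real.rpow_one_add' hr.1.le (by linarith)]; ring_nf
      simp only [Pi.sub_apply]
      rw [h, p1, p2, p3]
      generalize r ^ κ = P at *
      field_simp
      ring
    have := (intervalIntegral.integrableOn_Ioo_rpow_iff zero_lt_one).1 h3
    linarith
  refine ⟨a, ?_⟩
  filter_upwards [hα] with r h
  rw [h, hb0]; ring
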